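/- Fix t with a+2 ≤ t ≤ b. Then the right-focal Green's function is increasing in its second argument below the diagonal and constant above it: G_r(t, s−1) < G_r(t, s) for every s with a+3 ≤ s ≤ t; if t < b then G_r(t, t) < G_r(t, t+1); and G_r(t, s) = rf(t−a−1, α−1)/Γ(α) for every s with t+1 ≤ s ≤ b. -/

import Mathlib

/-- Rising factorial `rf x r = Γ(x+r)/Γ(x)`, with the convention `rf 0 r = 0`. -/
noncomputable def rf (x r : ℝ) : ℝ := if x = 0 then 0 else Real.Gamma (x + r) / Real.Gamma x

/-- The right-focal Green's function. -/
noncomputable def Gr (a : ℤ) (α : ℝ) (t s : ℤ) : ℝ :=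
  if t ≤ s - 1 then
    (1 / Real.Gamma α) * rf (t - a - 1 : ℝ) (α - 1)
  else
    (1 / Real.Gamma α) * (rf (t - a - 1 : ℝ) (α - 1) - rf (t - s + 1 : ℝ) (α - 1))

/-!
Above the diagonal `Gr a α t` is constant. For `s ≤ t + 1` the convention `rf 0 r = 0` lets the
single formula `Gr a α t s = (rf (t - a - 1) (α - 1) - rf (t - s + 1) (α - 1)) / Γ(α)` cover both
branches. Raising `s` by one lowers the argument of the subtracted rising factorial by one, so
monotonicity in `s` reduces to that of `x ↦ rf x r` under unit steps. This follows from the power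
rule `rf (x + 1) r - rf x r = r * rf (x + 1) (r - 1)` of the nabla calculus, whose right side is
positive for `x ≥ 0` and `r > 0`.
-/

section RisingFactorial

variable {x r : ℝ}

-- Mathlib sets `Γ(0) = 0`, so that `Γ(r) / Γ(0) = 0` agrees with the convention `rf 0 r = 0`.
theorem rf_eq_Gamma_div_Gamma (x r : ℝ) : rf x r = Real.Gamma (x + r) / Real.Gamma x := by
  rcases eq_or_ne x 0 with rfl | hx
  · simp [rf]
  · exact if_neg hx

@[simp]
theorem rf_zero_left (r : ℝ) : rf 0 r = 0 :=
  if_pos rfl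

theorem rf_pos (hx : 0 < x) (hxr : 0 < x + r) : 0 < rf x r := by
  rw [rf_eq_Gamma_div_Gamma]
  exact div_pos (Real.Gamma_pos_of_pos hxr) (Real.Gamma_pos_of_pos hx)

theorem inv_Gamma_eq_mul_inv_Gamma_add_one (x : ℝ) :
    (Real.Gamma x)⁻¹ = x * (Real.Gamma (x + 1))⁻¹ := by
  rcases eq_or_ne x 0 with rfl | hx
  · simp
  · rw [Real.Gamma_add_one hx, mul_inv, mul_inv_cancel_left₀ hx]

theorem rf_add_one_sub_rf (hxr : x + r ≠ 0) :
    rf (x + 1) r - rf x r = r * rf (x + 1) (r - 1) := by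
  have hnum : Real.Gamma (x + 1 + r) = (x + r) * Real.Gamma (x + r) := by
    rw [add_right_comm, Real.Gamma_add_one hxr]
  simp only [rf_eq_Gamma_div_Gamma, div_eq_mul_inv, hnum, add_add_sub_cancel,
    inv_Gamma_eq_mul_inv_Gamma_add_one x]
  ring

theorem rf_lt_rf_add_one (hx : 0 ≤ x) (hr : 0 < r) : rf x r < rf (x + 1) r := by
  have hxr : 0 < x + r := by positivity
  have hincr : 0 < r * rf (x + 1) (r - 1) :=
    mul_pos hr (rf_pos (by positivity) (by linarith))
  rwa [← rf_add_one_sub_rf hxr.ne', sub_pos] at hincr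

end RisingFactorial

section GreenFunction

variable {α : ℝ} {t s : ℤ}

theorem Gr_of_lt (a : ℤ) (α : ℝ) (hts : t < s) :
    Gr a α t s = rf (t - a - 1) (α - 1) / Real.Gamma α := by
  rw [Gr, if_pos (Int.le_sub_one_of_lt hts), one_div_mul_eq_div]

theorem Gr_of_le_add_one (a : ℤ) (α : ℝ) (hst : s ≤ t + 1) :
    Gr a α t s = (rf (t - a - 1) (α - 1) - rf (t - s + 1) (α - 1)) / Real.Gamma α := by
  rcases hst.eq_or_lt with rfl | hlt
  · simp [Gr_of_lt a α (lt_add_one t)]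
  · rw [Gr, if_neg (by lia), one_div_mul_eq_div]

theorem Gr_sub_one_lt_Gr (a : ℤ) (hα : 1 < α) (hst : s ≤ t + 1) :
    Gr a α t (s - 1) < Gr a α t s := by
  have hΓ : 0 < Real.Gamma α := Real.Gamma_pos_of_pos (by linarith)
  have hst' : (0 : ℝ) ≤ t - s + 1 := by
    exact_mod_cast (by lia : 0 ≤ t - s + 1)
  have hstep : rf (t - s + 1) (α - 1) < rf (t - (s - 1 : ℤ) + 1) (α - 1) := by
    convert rf_lt_rf_add_one hst' (sub_pos.mpr hα) using 2
    push_cast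
    ring
  rw [Gr_of_le_add_one a α (by lia), Gr_of_le_add_one a α hst]
  exact div_lt_div_of_pos_right (sub_lt_sub_left hstep _) hΓ

end GreenFunction

theorem right_focal_green_monotone_general (a : ℤ) {α : ℝ} (hα : 1 < α) (t : ℤ) :
    StrictMonoOn (Gr a α t) (Set.Iic (t + 1)) ∧
      ∀ s : ℤ, t < s → Gr a α t s = rf (t - a - 1) (α - 1) / Real.Gamma α :=
  ⟨strictMonoOn_of_sub_one_lt Set.ordConnected_Iic fun _ _ hs _ ↦ Gr_sub_one_lt_Gr a hα hs,
    fun _ ↦ Gr_of_lt a α⟩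

theorem right_focal_green_monotone (a b : ℤ) (hab : 2 ≤ b - a) (α : ℝ)
    (hα1 : 1 < α) (hα2 : α < 2) (t : ℤ) (ht1 : a + 2 ≤ t) (ht2 : t ≤ b) :
    (∀ s : ℤ, a + 3 ≤ s → s ≤ t → Gr a α t (s - 1) < Gr a α t s) ∧
    (t < b → Gr a α t t < Gr a α t (t + 1)) ∧
    (∀ s : ℤ, t + 1 ≤ s → s ≤ b →
      Gr a α t s = rf (t - a - 1 : ℝ) (α - 1) / Real.Gamma α) := by
  obtain ⟨hmono, hconst⟩ := right_focal_green_monotone_general a hα1 t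
  exact ⟨fun s _ hst ↦ hmono (Set.mem_Iic.mpr (by lia)) (Set.mem_Iic.mpr (by lia)) (sub_one_lt s),
    fun _ ↦ hmono (Set.mem_Iic.mpr (by lia)) Set.self_mem_Iic (lt_add_one t),
    fun s hts _ ↦ hconst s hts⟩
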